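/- Let α ∈ (1,2), ρ ∈ (1−1/α, 1/α), ρ̂ = 1−ρ. For every λ ≥ 0, ∫_0^∞ e^{−(α−1+λ)x} · [ Γ(2−α)/Γ(1−αρ̂) + ((1−αρ)/Γ(αρ)) ∫_x^∞ e^{αρ̂ z} (e^{z}−1)^{αρ−2} dz ] dx = Γ(1+λ) / ((α−1+λ)·Γ(αρ+λ)). -/

import Mathlib

open MeasureTheory

/-! Substituting `t = exp (-z)` in Euler's integral gives
`∫ z > 0, exp (-p z) (1 - exp (-z)) ^ (a - 1) = B(p, a)`. Let `k` be this integrand for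
`p = 2 - α` and `a = αρ`. The inner integrand of the theorem is the same function with `a - 1` in
place of `a`, and integrating `k'` over `(x, ∞)` turns the bracket into
`Γ(a)⁻¹ (k x + (p + a - 1) ∫ z in 0..x, k z)`: the constant `Γ(p) / Γ(p + a - 1)` is exactly what
completes the tail integral of `k` to a primitive vanishing at `0`. Multiplication by `exp (-s x)`
shifts `p` to `p + s` in `k`, and the Laplace transform of a primitive at `s` is `1 / s` times that
of the function, so at `s = α - 1 + λ` only `B(1 + λ, a)` and the recursion of `Γ` remain. -/

open Set Filter Topology Asymptotics Real

section LaplaceTransformOfPrimitive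

variable {E : Type*} [NormedAddCommGroup E] [NormedSpace ℝ E] {f : ℝ → E} {s : ℝ}

theorem exp_smul_intervalIntegral_eq_convolution (f : ℝ → E) (s x : ℝ) :
    exp (-s * x) • ∫ z in (0 : ℝ)..x, f z =
      ∫ z in (0 : ℝ)..x,
        (ContinuousLinearMap.lsmul ℝ ℝ).flip (exp (-s * z) • f z) (exp (-s * (x - z))) := by
  rw [← intervalIntegral.integral_smul]
  congr with z
  rw [ContinuousLinearMap.flip_apply, ContinuousLinearMap.lsmul_apply, smul_smul, ← exp_add]
  ring_nf

theorem integrableOn_exp_smul_primitive (hs : 0 < s)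
    (hf : IntegrableOn (fun z ↦ exp (-s * z) • f z) (Ioi 0)) :
    IntegrableOn (fun x ↦ exp (-s * x) • ∫ z in (0 : ℝ)..x, f z) (Ioi 0) := by
  have hexp := integrableOn_exp_mul_Ioi (neg_lt_zero.2 hs) 0
  have hconv := integrable_posConvolution hf hexp (ContinuousLinearMap.lsmul ℝ ℝ).flip
  simp_rw [exp_smul_intervalIntegral_eq_convolution]
  exact (integrable_indicator_iff measurableSet_Ioi).1 hconv

theorem integral_exp_smul_primitive [CompleteSpace E] (hs : 0 < s)
    (hf : IntegrableOn (fun z ↦ exp (-s * z) • f z) (Ioi 0)) :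
    ∫ x in Ioi 0, exp (-s * x) • ∫ z in (0 : ℝ)..x, f z =
      s⁻¹ • ∫ z in Ioi 0, exp (-s * z) • f z := by
  have hexp := integrableOn_exp_mul_Ioi (neg_lt_zero.2 hs) 0
  simp_rw [exp_smul_intervalIntegral_eq_convolution]
  rw [integral_posConvolution hf hexp, integral_exp_mul_Ioi (neg_lt_zero.2 hs) 0]
  simp

end LaplaceTransformOfPrimitive

section ExpNegSubstitution

variable {E : Type*} [NormedAddCommGroup E] [NormedSpace ℝ E]

theorem hasDerivAt_exp_neg (z : ℝ) : HasDerivAt (fun z ↦ exp (-z)) (-exp (-z)) z := by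
  simpa using (hasDerivAt_neg z).exp

theorem antitone_exp_neg : Antitone fun z : ℝ ↦ exp (-z) :=
  fun _ _ h ↦ exp_le_exp.2 (neg_le_neg h)

theorem image_exp_neg_Ioi_zero : (fun z ↦ exp (-z)) '' Ioi 0 = Ioo 0 1 := by
  rw [← Function.comp_def exp, image_comp, image_neg_Ioi, neg_zero, image_exp_Iio, exp_zero]

theorem integrableOn_Ioo_iff_comp_exp_neg (g : ℝ → E) :
    IntegrableOn g (Ioo 0 1) ↔ IntegrableOn (fun z ↦ exp (-z) • g (exp (-z))) (Ioi 0) := by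
  simpa [image_exp_neg_Ioi_zero] using
    integrableOn_image_iff_integrableOn_deriv_smul_of_antitoneOn measurableSet_Ioi
      (fun z _ ↦ (hasDerivAt_exp_neg z).hasDerivWithinAt) (antitone_exp_neg.antitoneOn (Ioi 0)) g

theorem integral_Ioo_eq_integral_comp_exp_neg (g : ℝ → E) :
    ∫ t in Ioo 0 1, g t = ∫ z in Ioi 0, exp (-z) • g (exp (-z)) := by
  simpa [image_exp_neg_Ioi_zero] using
    integral_image_eq_integral_deriv_smul_of_antitoneOn measurableSet_Ioi
      (fun z _ ↦ (hasDerivAt_exp_neg z).hasDerivWithinAt) (antitone_exp_neg.antitoneOn (Ioi 0)) g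

end ExpNegSubstitution

section BetaIntegral

variable {u v : ℝ}

theorem ofReal_rpow_mul_one_sub_rpow (u v : ℝ) {t : ℝ} (ht : t ∈ Icc 0 1) :
    ((t ^ (u - 1) * (1 - t) ^ (v - 1) : ℝ) : ℂ) =
      (t : ℂ) ^ ((u : ℂ) - 1) * (1 - (t : ℂ)) ^ ((v : ℂ) - 1) := by
  push_cast [Complex.ofReal_cpow ht.1, Complex.ofReal_cpow (sub_nonneg.2 ht.2)]
  rfl

theorem integrableOn_rpow_mul_one_sub_rpow (hu : 0 < u) (hv : 0 < v) :
    IntegrableOn (fun t : ℝ ↦ t ^ (u - 1) * (1 - t) ^ (v - 1)) (Ioo 0 1) := by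
  have h := Complex.betaIntegral_convergent (u := u) (v := v) (by simpa) (by simpa)
  rw [intervalIntegrable_iff_integrableOn_Ioo_of_le zero_le_one] at h
  refine IntegrableOn.congr_fun h.re (fun t ht ↦ ?_) measurableSet_Ioo
  rw [← ofReal_rpow_mul_one_sub_rpow u v (Ioo_subset_Icc_self ht)]
  exact Complex.ofReal_re _

theorem integral_rpow_mul_one_sub_rpow (hu : 0 < u) (hv : 0 < v) :
    ∫ t in Ioo 0 1, t ^ (u - 1) * (1 - t) ^ (v - 1) = ProbabilityTheory.beta u v := by
  apply Complex.ofReal_injective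
  calc ((∫ t in Ioo 0 1, t ^ (u - 1) * (1 - t) ^ (v - 1) : ℝ) : ℂ)
      = ∫ t in Ioo (0 : ℝ) 1, (t : ℂ) ^ ((u : ℂ) - 1) * (1 - (t : ℂ)) ^ ((v : ℂ) - 1) := by
        rw [← integral_complex_ofReal]
        exact setIntegral_congr_fun measurableSet_Ioo fun t ht ↦
          ofReal_rpow_mul_one_sub_rpow u v (Ioo_subset_Icc_self ht)
    _ = Complex.betaIntegral u v := by
        rw [Complex.betaIntegral, intervalIntegral.integral_of_le zero_le_one,
          integral_Ioc_eq_integral_Ioo]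
    _ = ProbabilityTheory.beta u v := by
        rw [Complex.betaIntegral_eq_Gamma_mul_div u v (by simpa) (by simpa),
          ProbabilityTheory.beta]
        simp [← Complex.ofReal_add, Complex.Gamma_ofReal]

end BetaIntegral

theorem one_sub_exp_neg_pos {z : ℝ} (hz : 0 < z) : 0 < 1 - exp (-z) :=
  sub_pos.2 (exp_lt_one_iff.2 (neg_lt_zero.2 hz))

/-- The integrand of Euler's beta integral `B(p, a)` after the substitution `t = exp (-z)`, where
`z` ranges over `(0, ∞)`. -/
noncomputable def betaKernel (p a z : ℝ) : ℝ := exp (-p * z) * (1 - exp (-z)) ^ (a - 1)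

section BetaKernel

variable {p a x z : ℝ}

theorem exp_neg_mul_betaKernel (s p a z : ℝ) :
    exp (-s * z) * betaKernel p a z = betaKernel (p + s) a z := by
  rw [betaKernel, betaKernel, ← mul_assoc, ← exp_add]
  ring_nf

theorem exp_mul_exp_sub_one_rpow (b c : ℝ) (hz : 0 < z) :
    exp (b * z) * (exp z - 1) ^ c = betaKernel (-b - c) (c + 1) z := by
  have hfactor : exp z - 1 = exp z * (1 - exp (-z)) := by
    rw [mul_sub, ← exp_add, add_neg_cancel, exp_zero, mul_one]
  rw [hfactor, mul_rpow (exp_pos z).le (one_sub_exp_neg_pos hz).le, ← exp_mul, ← mul_assoc,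
    ← exp_add, betaKernel]
  ring_nf

theorem exp_neg_smul_beta_integrand (p a z : ℝ) :
    exp (-z) • (exp (-z) ^ (p - 1) * (1 - exp (-z)) ^ (a - 1)) = betaKernel p a z := by
  rw [smul_eq_mul, ← mul_assoc, ← exp_mul, ← exp_add, betaKernel]
  ring_nf

theorem integrableOn_betaKernel (hp : 0 < p) (ha : 0 < a) :
    IntegrableOn (betaKernel p a) (Ioi 0) := by
  have h := (integrableOn_Ioo_iff_comp_exp_neg _).1 (integrableOn_rpow_mul_one_sub_rpow hp ha)
  simpa only [exp_neg_smul_beta_integrand] using h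

theorem integral_betaKernel (hp : 0 < p) (ha : 0 < a) :
    ∫ z in Ioi 0, betaKernel p a z = ProbabilityTheory.beta p a := by
  simp_rw [← integral_rpow_mul_one_sub_rpow hp ha, integral_Ioo_eq_integral_comp_exp_neg,
    exp_neg_smul_beta_integrand]

theorem hasDerivAt_betaKernel (p a : ℝ) (hz : 0 < z) :
    HasDerivAt (betaKernel p a)
      ((a - 1) * betaKernel p (a - 1) z - (p + a - 1) * betaKernel p a z) z := by
  have hpos := one_sub_exp_neg_pos hz
  have hexp : HasDerivAt (fun z ↦ exp (-p * z)) (exp (-p * z) * -p) z := by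
    simpa using ((hasDerivAt_id z).const_mul (-p)).exp
  have hbase : HasDerivAt (fun z ↦ 1 - exp (-z)) (exp (-z)) z := by
    simpa using (hasDerivAt_exp_neg z).const_sub 1
  have hpow : (1 - exp (-z)) ^ (a - 1) = (1 - exp (-z)) ^ (a - 1 - 1) * (1 - exp (-z)) := by
    rw [← rpow_add_one hpos.ne', sub_add_cancel]
  refine (hexp.mul (hbase.rpow_const (p := a - 1) (Or.inl hpos.ne'))).congr_deriv ?_
  rw [betaKernel, betaKernel, hpow]
  ring

theorem betaKernel_isBigO_exp_neg (p a : ℝ) :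
    betaKernel p a =O[atTop] fun z ↦ exp (-p * z) := by
  have hlim : Tendsto (fun z ↦ (1 - exp (-z)) ^ (a - 1)) atTop (𝓝 ((1 - 0) ^ (a - 1))) :=
    (tendsto_exp_neg_atTop_nhds_zero.const_sub 1).rpow_const (Or.inl (by norm_num))
  exact ((isBigO_refl (fun z ↦ exp (-p * z)) atTop).mul (hlim.isBigO_one ℝ)).congr_right
    fun _ ↦ mul_one _

theorem tendsto_betaKernel_atTop (hp : 0 < p) (a : ℝ) :
    Tendsto (betaKernel p a) atTop (𝓝 0) :=
  (betaKernel_isBigO_exp_neg p a).trans_tendsto <|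
    tendsto_exp_atBot.comp (tendsto_id.const_mul_atTop_of_neg (neg_lt_zero.2 hp))

theorem integrableOn_betaKernel_Ioi (hp : 0 < p) (a : ℝ) (hx : 0 < x) :
    IntegrableOn (betaKernel p a) (Ioi x) :=
  integrable_of_isBigO_exp_neg hp
    (fun _ hz ↦ (hasDerivAt_betaKernel p a (hx.trans_le hz)).continuousAt.continuousWithinAt)
    (betaKernel_isBigO_exp_neg p a)

theorem one_sub_mul_integral_betaKernel_sub_one (hp : 0 < p) (a : ℝ) (hx : 0 < x) :
    (1 - a) * ∫ z in Ioi x, betaKernel p (a - 1) z =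
      betaKernel p a x - (p + a - 1) * ∫ z in Ioi x, betaKernel p a z := by
  have hint₁ := (integrableOn_betaKernel_Ioi hp (a - 1) hx).const_mul (a - 1)
  have hint₂ := (integrableOn_betaKernel_Ioi hp a hx).const_mul (p + a - 1)
  have hftc := integral_Ioi_of_hasDerivAt_of_tendsto'
    (fun z hz ↦ hasDerivAt_betaKernel p a (hx.trans_le hz)) (hint₁.sub hint₂)
    (tendsto_betaKernel_atTop hp a)
  rw [integral_sub hint₁ hint₂, integral_const_mul, integral_const_mul] at hftc
  linarith

theorem integral_exp_mul_primitive_betaKernel {s : ℝ} (hp : 0 < p) (ha : 0 < a) (hs : 0 < s) :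
    ∫ x in Ioi 0, exp (-s * x) * ∫ z in (0 : ℝ)..x, betaKernel p a z =
      s⁻¹ * ProbabilityTheory.beta (p + s) a := by
  have h := integral_exp_smul_primitive (f := betaKernel p a) hs
  simp_rw [smul_eq_mul, exp_neg_mul_betaKernel] at h
  rw [h (integrableOn_betaKernel (add_pos hp hs) ha), integral_betaKernel (add_pos hp hs) ha]

end BetaKernel

/-- The ascending renewal density of the Lamperti transform of the path-censored stable process,
multiplied by `exp ((α - 1) x)`, in the parameters `p = 2 - α` and `a = α ρ`; in terms of these
`1 - α (1 - ρ) = p + a - 1`. -/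
noncomputable def tiltedRenewalDensity (p a x : ℝ) : ℝ :=
  Gamma p / Gamma (p + a - 1) + (1 - a) / Gamma a * ∫ z in Ioi x, betaKernel p (a - 1) z

section TiltedRenewalDensity

variable {p a s x : ℝ}

theorem Gamma_div_Gamma_add_sub_one (ha : 0 < a) (hpa : p + a - 1 ≠ 0) :
    Gamma p / Gamma (p + a - 1) = (Gamma a)⁻¹ * ((p + a - 1) * ProbabilityTheory.beta p a) := by
  have hrec : Gamma (p + a) = (p + a - 1) * Gamma (p + a - 1) := by
    rw [← Gamma_add_one hpa, sub_add_cancel]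
  have hΓ := (Gamma_pos_of_pos ha).ne'
  rw [ProbabilityTheory.beta, hrec]
  field_simp

theorem tiltedRenewalDensity_eq (hp : 0 < p) (ha : 0 < a) (hpa : p + a - 1 ≠ 0) (hx : 0 < x) :
    tiltedRenewalDensity p a x =
      (Gamma a)⁻¹ * (betaKernel p a x + (p + a - 1) * ∫ z in (0 : ℝ)..x, betaKernel p a z) := by
  rw [tiltedRenewalDensity, div_mul_eq_mul_div, one_sub_mul_integral_betaKernel_sub_one hp a hx,
    Gamma_div_Gamma_add_sub_one ha hpa, ← integral_betaKernel hp ha,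
    ← intervalIntegral.integral_Ioi_sub_Ioi (integrableOn_betaKernel hp ha) hx.le]
  ring

theorem integral_exp_mul_tiltedRenewalDensity_eq_beta (hp : 0 < p) (ha : 0 < a)
    (hpa : p + a - 1 ≠ 0) (hs : 0 < s) :
    ∫ x in Ioi 0, exp (-s * x) * tiltedRenewalDensity p a x =
      (Gamma a)⁻¹ * ((p + s + a - 1) / s * ProbabilityTheory.beta (p + s) a) := by
  have hker := integrableOn_betaKernel (add_pos hp hs) ha
  have hprim : IntegrableOn (fun x ↦ exp (-s * x) * ∫ z in (0 : ℝ)..x, betaKernel p a z) (Ioi 0) :=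
    integrableOn_exp_smul_primitive hs (by simpa only [smul_eq_mul, exp_neg_mul_betaKernel])
  have hsplit : ∀ x ∈ Ioi (0 : ℝ), exp (-s * x) * tiltedRenewalDensity p a x =
      (Gamma a)⁻¹ * (betaKernel (p + s) a x +
        (p + a - 1) * (exp (-s * x) * ∫ z in (0 : ℝ)..x, betaKernel p a z)) := fun x hx ↦ by
    rw [tiltedRenewalDensity_eq hp ha hpa hx, ← exp_neg_mul_betaKernel]
    ring
  rw [setIntegral_congr_fun measurableSet_Ioi hsplit, integral_const_mul,
    integral_add hker (hprim.const_mul _), integral_const_mul,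
    integral_exp_mul_primitive_betaKernel hp ha hs, integral_betaKernel (add_pos hp hs) ha]
  field_simp
  ring

theorem integral_exp_mul_tiltedRenewalDensity (hp : 0 < p) (ha : 0 < a) (hpa : p + a - 1 ≠ 0)
    (hs : 0 < s) (hpsa : p + s + a - 1 ≠ 0) :
    ∫ x in Ioi 0, exp (-s * x) * tiltedRenewalDensity p a x =
      Gamma (p + s) / (s * Gamma (p + s + a - 1)) := by
  rw [integral_exp_mul_tiltedRenewalDensity_eq_beta hp ha hpa hs, mul_comm s, ← div_div,
    Gamma_div_Gamma_add_sub_one ha hpsa]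
  ring

theorem tiltedRenewalDensity_two_sub {α ρ : ℝ} (hx : 0 ≤ x) :
    tiltedRenewalDensity (2 - α) (α * ρ) x =
      Gamma (2 - α) / Gamma (1 - α * (1 - ρ)) + (1 - α * ρ) / Gamma (α * ρ) *
        ∫ z in Ioi x, exp (α * (1 - ρ) * z) * (exp z - 1) ^ (α * ρ - 2) := by
  have hinner : ∀ z ∈ Ioi x, betaKernel (2 - α) (α * ρ - 1) z =
      exp (α * (1 - ρ) * z) * (exp z - 1) ^ (α * ρ - 2) := fun z hz ↦ by
    rw [exp_mul_exp_sub_one_rpow _ _ (hx.trans_lt hz)]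
    ring_nf
  rw [tiltedRenewalDensity, setIntegral_congr_fun measurableSet_Ioi hinner]
  ring_nf

end TiltedRenewalDensity

theorem ascending_renewal_laplace_transform_big_alpha_general (α ρ lam : ℝ) (hα : α < 2)
    (hαρ : 0 < α * ρ) (hαρ' : α * (1 - ρ) ≠ 1) (hlam : 0 < α - 1 + lam) (hlam' : α * ρ + lam ≠ 0) :
    ∫ x in Ioi 0, exp (-(α - 1 + lam) * x) *
        (Gamma (2 - α) / Gamma (1 - α * (1 - ρ)) + (1 - α * ρ) / Gamma (α * ρ) *
          ∫ z in Ioi x, exp (α * (1 - ρ) * z) * (exp z - 1) ^ (α * ρ - 2)) =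
      Gamma (1 + lam) / ((α - 1 + lam) * Gamma (α * ρ + lam)) := by
  have hp : 2 - α + (α - 1 + lam) = 1 + lam := by ring
  have ha : 1 + lam + α * ρ - 1 = α * ρ + lam := by ring
  have hpa : 2 - α + α * ρ - 1 ≠ 0 := fun h ↦ hαρ' (by linarith)
  have h := integral_exp_mul_tiltedRenewalDensity (sub_pos.2 hα) hαρ hpa hlam (by rwa [hp, ha])
  rw [hp, ha] at h
  rw [← h]
  refine setIntegral_congr_fun measurableSet_Ioi fun x hx ↦ ?_
  rw [tiltedRenewalDensity_two_sub (le_of_lt hx)]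

theorem ascending_renewal_laplace_transform_big_alpha
    (α ρ : ℝ) (hα : α ∈ Set.Ioo (1:ℝ) 2) (hρ : ρ ∈ Set.Ioo (1 - 1/α) (1/α))
    (lam : ℝ) (hlam : 0 ≤ lam) :
    ∫ x in Set.Ioi (0:ℝ),
        Real.exp (-(α - 1 + lam) * x) *
          (Real.Gamma (2 - α) / Real.Gamma (1 - α * (1 - ρ)) +
            (1 - α * ρ) / Real.Gamma (α * ρ) *
              ∫ z in Set.Ioi x, Real.exp (α * (1 - ρ) * z) * (Real.exp z - 1) ^ (α * ρ - 2)) =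
    Real.Gamma (1 + lam) / ((α - 1 + lam) * Real.Gamma (α * ρ + lam)) := by
  obtain ⟨hα₁, hα₂⟩ := hα
  have hαρ' : (1 - ρ) * α < 1 := (lt_div_iff₀ (by linarith)).1 (by linarith [hρ.1])
  exact ascending_renewal_laplace_transform_big_alpha_general α ρ lam hα₂ (by linarith)
    (by linarith) (by linarith) (by linarith)
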